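/- Let c satisfy [H1] and [H2]. Suppose U₁, U₂ : ℝ × {Im k ≥ 0} → ℂ are such that for each k with Im k ≥ 0, U₁(·,k) and U₂(·,k) are the Jost solutions from +∞ and from −∞ at k, and for each fixed x the maps k ↦ U₁(x,k), ∂ₓU₁(x,k), U₂(x,k), ∂ₓU₂(x,k) are holomorphic on {Im k > 0} and continuous on {Im k ≥ 0}. Suppose T : {Im k ≥ 0} → ℂ is continuous, holomorphic on {Im k > 0}, and satisfies T(k) · ( ∂ₓU₁(x,k) U₂(x,k) − U₁(x,k) ∂ₓU₂(x,k) ) = 2ik for all x ∈ ℝ and all k with Im k ≥ 0. Then |T(k) · e^{ik ∫_ℝ Q(s) ds}| ≤ 1 for every k with Im k ≥ 0, where Q = 1 − 1/c. -/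

import Mathlib

open MeasureTheory Filter Topology

noncomputable section

/-- Hypothesis [H1]: `c` is essentially bounded below away from `0` and bounded above. -/
def HypH1 (c : ℝ → ℝ) : Prop :=
  ∃ c₀ > (0 : ℝ), ∃ cM > (0 : ℝ), ∀ᵐ x : ℝ, c₀ < c x ∧ c x ≤ cM

/-- Hypothesis [H1] with explicit constants `c₀`, `cM`. -/
def HypH1c (c : ℝ → ℝ) (c₀ cM : ℝ) : Prop :=
  0 < c₀ ∧ 0 < cM ∧ ∀ᵐ x : ℝ, c₀ < c x ∧ c x ≤ cM

/-- Hypothesis [H2]: `|c(x) - 1| ≤ C ⟨x⟩^{-1-δ}` almost everywhere. -/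
def HypH2 (c : ℝ → ℝ) : Prop :=
  ∃ C > (0 : ℝ), ∃ δ > (0 : ℝ),
    ∀ᵐ x : ℝ, |c x - 1| ≤ C * (1 + x ^ 2) ^ (-(1 + δ) / 2)

/-- `u` is continuously differentiable, its derivative is locally absolutely continuous,
and `u'' + (k²/c²) u = 0` holds almost everywhere (equivalently, the integral formulation
of the second-order equation holds). -/
def SolvesHelmholtz (c : ℝ → ℝ) (k : ℂ) (u : ℝ → ℂ) : Prop :=
  ContDiff ℝ 1 u ∧
  ∀ a b : ℝ, deriv u b = deriv u a + ∫ x in a..b, -(k ^ 2 / ((c x : ℂ) ^ 2)) * u x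

/-- The Jost solution from `+∞` at `k` : `e^{-ikx} u(x) → 1` as `x → +∞`. -/
def IsJostPlus (c : ℝ → ℝ) (k : ℂ) (u : ℝ → ℂ) : Prop :=
  SolvesHelmholtz c k u ∧
  Tendsto (fun x : ℝ => Complex.exp (-(Complex.I * k * (x : ℂ))) * u x) atTop (𝓝 1)

/-- The Jost solution from `-∞` at `k` : `e^{ikx} u(x) → 1` as `x → -∞`. -/
def IsJostMinus (c : ℝ → ℝ) (k : ℂ) (u : ℝ → ℂ) : Prop :=
  SolvesHelmholtz c k u ∧
  Tendsto (fun x : ℝ => Complex.exp (Complex.I * k * (x : ℂ)) * u x) atBot (𝓝 1)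

/-- `q = 1 - 1/c²`. -/
def qfun (c : ℝ → ℝ) (x : ℝ) : ℝ := 1 - 1 / (c x) ^ 2

/-- `Q = 1 - 1/c`. -/
def Qfun (c : ℝ → ℝ) (x : ℝ) : ℝ := 1 - 1 / c x

/-- Regularity in `k` of a family of solutions: holomorphy on the open upper half-plane
and continuity up to the real axis, for the solution and its `x`-derivative. -/
def JostFamilyRegular (U : ℂ → ℝ → ℂ) : Prop :=
  ∀ y : ℝ,
    DifferentiableOn ℂ (fun k => U k y) {k : ℂ | 0 < k.im} ∧
    ContinuousOn (fun k => U k y) {k : ℂ | 0 ≤ k.im} ∧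
    DifferentiableOn ℂ (fun k => deriv (U k) y) {k : ℂ | 0 < k.im} ∧
    ContinuousOn (fun k => deriv (U k) y) {k : ℂ | 0 ≤ k.im}

/-! For `Im k > 0` and a solution `u`, AM–GM makes the weighted energy flux
`e^{2 Im k ∫ 1/c} Re (u' ū / (ik))` nonincreasing. For the Jost solution from `+∞` its limit at
`+∞` follows from `e^{-ikx} u → 1` and `e^{-ikx} u' → ik`, so it bounds the flux of `u₁` below at
every point; reflecting `x ↦ -x`, the same holds for minus the flux of `u₂`. The second limit holds
because `e^{-ikx} (u' + iku)` has an integrable derivative, so that `(e^{-ikx} u)'` converges,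
necessarily to `0`. The identity
`|Ab - aB|² = |A b̄ + a B̄|² - 4 Re (A ā) Re (B b̄)` turns the product of these two bounds into
the lower bound `2 |k| e^{- Im k ∫ Q}` for the Wronskian, that is, into the claim for `Im k > 0`;
continuity of `T` extends it to real `k`. -/

section AbsolutelyContinuous

variable {E F : Type*} [NormedAddCommGroup E] [NormedAddCommGroup F]

theorem absolutelyContinuousOnInterval_of_dist_le {X Y : Type*} [PseudoMetricSpace X]
    [PseudoMetricSpace Y] {f : ℝ → X} {g : ℝ → Y} {a b K : ℝ}
    (hg : AbsolutelyContinuousOnInterval g a b)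
    (hfg : ∀ x ∈ Set.uIcc a b, ∀ y ∈ Set.uIcc a b, dist (f x) (f y) ≤ K * dist (g x) (g y)) :
    AbsolutelyContinuousOnInterval f a b := by
  have hKg := Tendsto.const_mul K hg
  rw [mul_zero] at hKg
  refine squeeze_zero' (.of_forall fun I => Finset.sum_nonneg fun i _ => dist_nonneg) ?_ hKg
  filter_upwards [mem_inf_of_right (mem_principal_self _)] with I hI
  rw [Finset.mul_sum]
  exact Finset.sum_le_sum fun i hi => hfg _ (hI.1 i hi).1 _ (hI.1 i hi).2

variable [NormedSpace ℝ E] [NormedSpace ℝ F]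

theorem absolutelyContinuousOnInterval_intervalIntegral {f : ℝ → E} (hf : LocallyIntegrable f)
    (x₀ a b : ℝ) : AbsolutelyContinuousOnInterval (fun x => ∫ t in x₀..x, f t) a b := by
  have hfi : ∀ x y, IntervalIntegrable f volume x y := fun x y =>
    (hf.integrableOn_isCompact isCompact_uIcc).intervalIntegrable
  have norm_primitive :
      AbsolutelyContinuousOnInterval (fun x => ∫ t in a..x, ‖f t‖) a b :=
    (hfi a b).norm.absolutelyContinuousOnInterval_intervalIntegral Set.left_mem_uIcc
  refine absolutelyContinuousOnInterval_of_dist_le (K := 1) norm_primitive fun x _ y _ => ?_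
  rw [one_mul, dist_eq_norm, dist_eq_norm,
    intervalIntegral.integral_interval_sub_left (hfi _ _) (hfi _ _),
    intervalIntegral.integral_interval_sub_left (hfi _ _).norm (hfi _ _).norm, Real.norm_eq_abs]
  exact intervalIntegral.norm_integral_le_abs_integral_norm

/-- `f` is locally absolutely continuous with almost-everywhere derivative `f'`. This is the
regularity of the solutions of a second-order equation with `L¹_loc` coefficients. -/
structure HasACDeriv (f f' : ℝ → E) : Prop where
  absolutelyContinuousOnInterval : ∀ a b, AbsolutelyContinuousOnInterval f a b
  ae_hasDerivAt : ∀ᵐ x, HasDerivAt f (f' x) x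

namespace HasACDeriv

theorem of_contDiff {f : ℝ → E} (hf : ContDiff ℝ 1 f) : HasACDeriv f (deriv f) where
  absolutelyContinuousOnInterval _ _ := hf.contDiffOn.absolutelyContinuousOnInterval
  ae_hasDerivAt := .of_forall fun x => (hf.differentiable one_ne_zero x).hasDerivAt

theorem intervalIntegral [CompleteSpace E] {f : ℝ → E} (hf : LocallyIntegrable f) (x₀ : ℝ) :
    HasACDeriv (fun x => ∫ t in x₀..x, f t) f where
  absolutelyContinuousOnInterval := absolutelyContinuousOnInterval_intervalIntegral hf x₀
  ae_hasDerivAt := (LocallyIntegrable.ae_hasDerivAt_integral hf).mono fun _ hx => hx x₀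

variable {f f' g g' : ℝ → E}

theorem congr_deriv (hf : HasACDeriv f f') (h : ∀ x, f' x = g' x) : HasACDeriv f g' :=
  funext h ▸ hf

theorem add (hf : HasACDeriv f f') (hg : HasACDeriv g g') :
    HasACDeriv (fun x => f x + g x) (fun x => f' x + g' x) where
  absolutelyContinuousOnInterval a b :=
    (hf.absolutelyContinuousOnInterval a b).fun_add (hg.absolutelyContinuousOnInterval a b)
  ae_hasDerivAt := by
    filter_upwards [hf.ae_hasDerivAt, hg.ae_hasDerivAt] with x hfx hgx using hfx.add hgx

theorem sub (hf : HasACDeriv f f') (hg : HasACDeriv g g') :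
    HasACDeriv (fun x => f x - g x) (fun x => f' x - g' x) where
  absolutelyContinuousOnInterval a b :=
    (hf.absolutelyContinuousOnInterval a b).fun_sub (hg.absolutelyContinuousOnInterval a b)
  ae_hasDerivAt := by
    filter_upwards [hf.ae_hasDerivAt, hg.ae_hasDerivAt] with x hfx hgx using hfx.sub hgx

theorem mul {A : Type*} [NormedDivisionRing A] [NormedAlgebra ℝ A] {f f' g g' : ℝ → A}
    (hf : HasACDeriv f f') (hg : HasACDeriv g g') :
    HasACDeriv (fun x => f x * g x) (fun x => f' x * g x + f x * g' x) where
  absolutelyContinuousOnInterval a b :=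
    (hf.absolutelyContinuousOnInterval a b).fun_smul (hg.absolutelyContinuousOnInterval a b)
  ae_hasDerivAt := by
    filter_upwards [hf.ae_hasDerivAt, hg.ae_hasDerivAt] with x hfx hgx using hfx.mul hgx

theorem comp (hf : HasACDeriv f f') {φ : E → F} (hφ : ContDiff ℝ 1 φ) :
    HasACDeriv (fun x => φ (f x)) (fun x => fderiv ℝ φ (f x) (f' x)) where
  absolutelyContinuousOnInterval a b := by
    have hfab := hf.absolutelyContinuousOnInterval a b
    obtain ⟨K, hK⟩ :=
      (hφ.locallyLipschitz.locallyLipschitzOn (s := f '' Set.uIcc a b)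
        ).exists_lipschitzOnWith_of_compact (isCompact_uIcc.image_of_continuousOn hfab.continuousOn)
    exact absolutelyContinuousOnInterval_of_dist_le hfab fun x hx y hy =>
      hK.dist_le_mul _ (Set.mem_image_of_mem f hx) _ (Set.mem_image_of_mem f hy)
  ae_hasDerivAt := by
    filter_upwards [hf.ae_hasDerivAt] with x hx
    exact (hφ.differentiable one_ne_zero (f x)).hasFDerivAt.comp_hasDerivAt x hx

theorem clm_comp (hf : HasACDeriv f f') (L : E →L[ℝ] F) :
    HasACDeriv (fun x => L (f x)) (fun x => L (f' x)) :=
  (hf.comp L.contDiff).congr_deriv fun x => by rw [L.fderiv]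

theorem const_mul {A : Type*} [NormedRing A] [NormedAlgebra ℝ A] {f f' : ℝ → A}
    (hf : HasACDeriv f f') (a : A) : HasACDeriv (fun x => a * f x) (fun x => a * f' x) :=
  hf.clm_comp (ContinuousLinearMap.mul ℝ A a)

theorem integral_eq_sub [CompleteSpace E] (hf : HasACDeriv f f') (hf' : LocallyIntegrable f')
    (a b : ℝ) : ∫ x in a..b, f' x = f b - f a := by
  have hdiff : HasACDeriv (fun x => f x - ∫ t in a..x, f' t) 0 :=
    (hf.sub (.intervalIntegral hf' a)).congr_deriv fun x => sub_self _
  obtain ⟨C, hC⟩ := (hdiff.absolutelyContinuousOnInterval a b).const_of_ae_hasDerivAt_zero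
    (hdiff.ae_hasDerivAt.mono fun _ hx _ => hx)
  have hab := (hC b Set.right_mem_uIcc).trans (hC a Set.left_mem_uIcc).symm
  rw [intervalIntegral.integral_same, sub_zero] at hab
  rw [← hab, sub_sub_cancel]

theorem antitone {f f' : ℝ → ℝ} (hf : HasACDeriv f f') (hf' : ∀ᵐ x, f' x ≤ 0) :
    Antitone f := by
  intro a b hab
  rw [← sub_nonpos, ← (hf.absolutelyContinuousOnInterval a b).integral_deriv_eq_sub,
    intervalIntegral.integral_of_le hab]
  refine integral_nonpos_of_ae (ae_restrict_of_ae ?_)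
  filter_upwards [hf.ae_hasDerivAt, hf'] with x hx hx'
  exact hx.deriv.trans_le hx'

theorem exists_tendsto_atTop [CompleteSpace E] (hf : HasACDeriv f f')
    (hf' : LocallyIntegrable f') (hf'_top : IntegrableAtFilter f' atTop) :
    ∃ l, Tendsto f atTop (𝓝 l) := by
  have hint : IntegrableOn f' (Set.Ioi 0) :=
    ((hf'.locallyIntegrableOn (Set.Ici 0)).integrableOn_of_isBigO_atTop
      (Asymptotics.isBigO_refl _ _) hf'_top).mono_set Set.Ioi_subset_Ici_self
  refine ⟨f 0 + ∫ x in Set.Ioi 0, f' x, ?_⟩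
  refine ((intervalIntegral_tendsto_integral_Ioi 0 hint tendsto_id).const_add (f 0)).congr
    fun x => ?_
  rw [hf.integral_eq_sub hf', add_sub_cancel, id]

end HasACDeriv

end AbsolutelyContinuous

theorem eq_zero_of_tendsto_of_tendsto_deriv {E : Type*} [NormedAddCommGroup E] [NormedSpace ℝ E]
    {f f' : ℝ → E} {l l' : E} (hff' : ∀ x, HasDerivAt f (f' x) x)
    (hf : Tendsto f atTop (𝓝 l)) (hf' : Tendsto f' atTop (𝓝 l')) : l' = 0 := by
  have increment_to_zero : Tendsto (fun x => f (x + 1) - f x) atTop (𝓝 0) := by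
    simpa using (hf.comp (tendsto_atTop_add_const_right _ 1 tendsto_id)).sub hf
  have increment_to_deriv : Tendsto (fun x => f (x + 1) - f x) atTop (𝓝 l') := by
    rw [Metric.tendsto_atTop] at hf' ⊢
    intro ε hε
    obtain ⟨N, hN⟩ := hf' (ε / 2) (half_pos hε)
    refine ⟨N, fun x hx => ?_⟩
    have hderiv : ∀ y ∈ Set.Icc x (x + 1),
        HasDerivWithinAt (fun y => f y - y • l') (f' y - l') (Set.Icc x (x + 1)) y := fun y _ =>
      (((hff' y).sub ((hasDerivAt_id y).smul_const l')).congr_deriv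
        (by rw [one_smul])).hasDerivWithinAt
    have hbound : ∀ y ∈ Set.Icc x (x + 1), ‖f' y - l'‖ ≤ ε / 2 := fun y hy =>
      dist_eq_norm (f' y) l' ▸ (hN y (hx.le.trans hy.1)).le
    have hx1 : x ≤ x + 1 := by linarith
    have hmvt := (convex_Icc x (x + 1)).norm_image_sub_le_of_norm_hasDerivWithin_le
      hderiv hbound (Set.left_mem_Icc.2 hx1) (Set.right_mem_Icc.2 hx1)
    rw [add_sub_cancel_left, norm_one, mul_one, add_smul, one_smul] at hmvt
    calc dist (f (x + 1) - f x) l' = ‖f (x + 1) - (x • l' + l') - (f x - x • l')‖ := by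
          rw [dist_eq_norm]; congr 1; abel
      _ < ε := by linarith
  exact tendsto_nhds_unique increment_to_deriv increment_to_zero

section Helmholtz

open scoped ComplexConjugate

theorem locallyIntegrable_one_div {c : ℝ → ℝ} (hQ : LocallyIntegrable (Qfun c)) :
    LocallyIntegrable fun x => 1 / c x :=
  ((locallyIntegrable_const 1).sub hQ).congr (.of_forall fun x => sub_sub_cancel 1 (1 / c x))

/-- The factor `e^{-ikx}` that normalises the Jost solution from `+∞`. -/
def jostFactor (k : ℂ) (x : ℝ) : ℂ := Complex.exp (-(Complex.I * k * x))

theorem contDiff_jostFactor (k : ℂ) : ContDiff ℝ 1 (jostFactor k) :=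
  Complex.contDiff_exp.comp (contDiff_const.mul Complex.ofRealCLM.contDiff).neg

theorem hasDerivAt_jostFactor (k : ℂ) (x : ℝ) :
    HasDerivAt (jostFactor k) (-(Complex.I * k) * jostFactor k x) x := by
  have hexponent : HasDerivAt (fun x : ℝ => -(Complex.I * k * (x : ℂ))) (-(Complex.I * k)) x :=
    ((Complex.ofRealCLM.hasDerivAt (x := x)).const_mul (Complex.I * k)).neg.congr_deriv (by simp)
  exact hexponent.cexp.congr_deriv (mul_comm _ _)

theorem jostFactor_mul_conj (k : ℂ) (x : ℝ) :
    jostFactor k x * conj (jostFactor k x) = Real.exp (2 * k.im * x) := by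
  have hre : (-(Complex.I * k * x)).re = k.im * x := by
    rw [Complex.neg_re, Complex.re_mul_ofReal, Complex.I_mul_re, neg_mul, neg_neg]
  rw [Complex.mul_conj', jostFactor, Complex.norm_exp, hre, ← Complex.ofReal_pow,
    ← Real.exp_nat_mul, Nat.cast_two, mul_assoc]

/-- The energy flux `Re (u' ū / (ik))` of a solution `u` of `u'' + (k²/c²) u = 0`, normalised to be
`1` for the plane wave `e^{ikx}` with `k` real. -/
def flux (k : ℂ) (u : ℝ → ℂ) (x : ℝ) : ℝ :=
  ((Complex.I * k)⁻¹ * deriv u x * conj (u x)).re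

theorem abs_flux_le (k : ℂ) (u : ℝ → ℂ) (x : ℝ) :
    |flux k u x| ≤ ‖u x‖ * (‖deriv u x‖ / ‖k‖) := by
  refine (Complex.abs_re_le_norm _).trans_eq ?_
  simp only [norm_mul, norm_inv, Complex.norm_I, one_mul, RCLike.norm_conj]
  ring

theorem flux_comp_neg (k : ℂ) (u : ℝ → ℂ) (x : ℝ) :
    flux k (fun y => u (-y)) x = -flux k u (-x) := by
  simp only [flux, deriv_comp_neg, mul_neg, neg_mul, Complex.neg_re]

namespace SolvesHelmholtz

variable {c : ℝ → ℝ} {k : ℂ} {u : ℝ → ℂ}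

theorem hasDerivAt (hu : SolvesHelmholtz c k u) (x : ℝ) : HasDerivAt u (deriv u x) x :=
  (hu.1.differentiable one_ne_zero x).hasDerivAt

theorem locallyIntegrable (hu : SolvesHelmholtz c k u) (hq : LocallyIntegrable (qfun c)) :
    LocallyIntegrable fun x => -(k ^ 2 / (c x : ℂ) ^ 2) * u x := by
  have hcoeff : LocallyIntegrable fun x => ((qfun c x - 1 : ℝ) : ℂ) := fun x =>
    let ⟨s, hs, hint⟩ := (hq.sub (locallyIntegrable_const 1)) x
    ⟨s, hs, hint.ofReal⟩
  have hcont : Continuous fun x => k ^ 2 * u x := continuous_const.mul hu.1.continuous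
  refine (hcoeff.mul_continuous hcont).congr (.of_forall fun x => ?_)
  simp only [qfun]
  push_cast
  ring

theorem hasACDeriv_deriv (hu : SolvesHelmholtz c k u) (hq : LocallyIntegrable (qfun c)) :
    HasACDeriv (deriv u) fun x => -(k ^ 2 / (c x : ℂ) ^ 2) * u x := by
  have hint := HasACDeriv.intervalIntegral (hu.locallyIntegrable hq) 0
  have hderiv : deriv u = fun x => deriv u 0 + ∫ t in 0..x, -(k ^ 2 / (c t : ℂ) ^ 2) * u t :=
    funext (hu.2 0)
  rw [hderiv]
  exact ((HasACDeriv.of_contDiff contDiff_const).add hint).congr_deriv fun x => by simp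

theorem hasACDeriv_flux (hu : SolvesHelmholtz c k u) (hq : LocallyIntegrable (qfun c)) :
    HasACDeriv (flux k u)
      fun x => -(k.im * ((1 / c x * ‖u x‖) ^ 2 + (‖deriv u x‖ / ‖k‖) ^ 2)) := by
  have hconj : HasACDeriv (fun x => conj (u x)) (fun x => conj (deriv u x)) :=
    (HasACDeriv.of_contDiff hu.1).clm_comp (Complex.conjCLE : ℂ →L[ℝ] ℂ)
  refine ((((hu.hasACDeriv_deriv hq).const_mul (Complex.I * k)⁻¹).mul hconj).clm_comp
    Complex.reCLM).congr_deriv fun x => ?_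
  obtain rfl | hk := eq_or_ne k 0
  · simp
  have potential_term : (Complex.I * k)⁻¹ * (-(k ^ 2 / (c x : ℂ) ^ 2) * u x) * conj (u x) =
      (((1 / c x * ‖u x‖) ^ 2 : ℝ) : ℂ) * (Complex.I * k) := by
    rw [mul_assoc, mul_assoc, Complex.mul_conj']
    push_cast
    field_simp
    rw [Complex.I_sq]
    ring
  have kinetic_term : (Complex.I * k)⁻¹ * deriv u x * conj (deriv u x) =
      ((‖deriv u x‖ ^ 2 : ℝ) : ℂ) * (Complex.I * k)⁻¹ := by
    rw [mul_assoc, Complex.mul_conj', mul_comm, Complex.ofReal_pow]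
  rw [Complex.reCLM_apply, potential_term, kinetic_term, Complex.add_re, Complex.re_ofReal_mul,
    Complex.re_ofReal_mul, Complex.inv_re, Complex.normSq_eq_norm_sq, norm_mul, Complex.norm_I,
    one_mul, Complex.I_mul_re]
  ring

theorem antitone_exp_mul_flux (hu : SolvesHelmholtz c k u) (hk : 0 ≤ k.im)
    (hQ : LocallyIntegrable (Qfun c)) (hq : LocallyIntegrable (qfun c)) (x₀ : ℝ) :
    Antitone fun x => Real.exp (2 * k.im * ∫ t in x₀..x, 1 / c t) * flux k u x := by
  set E : ℝ → ℝ := fun x => Real.exp (2 * k.im * ∫ t in x₀..x, 1 / c t)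
  have hE : HasACDeriv E fun x => E x * (2 * k.im * (1 / c x)) :=
    (((HasACDeriv.intervalIntegral (locallyIntegrable_one_div hQ) x₀).const_mul (2 * k.im)).comp
      Real.contDiff_exp).congr_deriv fun x => by
        rw [fderiv_eq_smul_deriv, Real.deriv_exp, smul_eq_mul, mul_comm]
  refine (hE.mul (hu.hasACDeriv_flux hq)).antitone (.of_forall fun x => ?_)
  have flux_le : 1 / c x * flux k u x ≤ |1 / c x| * (‖u x‖ * (‖deriv u x‖ / ‖k‖)) :=
    (le_abs_self _).trans ((abs_mul _ _).trans_le
      (mul_le_mul_of_nonneg_left (abs_flux_le k u x) (abs_nonneg _)))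
  have am_gm := two_mul_le_add_sq (|1 / c x| * ‖u x‖) (‖deriv u x‖ / ‖k‖)
  rw [mul_pow, sq_abs, ← mul_pow] at am_gm
  calc E x * (2 * k.im * (1 / c x)) * flux k u x +
        E x * -(k.im * ((1 / c x * ‖u x‖) ^ 2 + (‖deriv u x‖ / ‖k‖) ^ 2))
      = E x * k.im * (2 * (1 / c x * flux k u x) -
          ((1 / c x * ‖u x‖) ^ 2 + (‖deriv u x‖ / ‖k‖) ^ 2)) := by ring
    _ ≤ 0 := mul_nonpos_of_nonneg_of_nonpos (mul_nonneg (Real.exp_pos _).le hk) (by linarith)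

end SolvesHelmholtz

namespace IsJostPlus

variable {c : ℝ → ℝ} {k : ℂ} {u : ℝ → ℂ}

theorem hasACDeriv_jostFactor_mul (hu : IsJostPlus c k u) (hq : LocallyIntegrable (qfun c)) :
    HasACDeriv (fun x => jostFactor k x * (deriv u x + Complex.I * k * u x))
      fun x => k ^ 2 * qfun c x * (jostFactor k x * u x) := by
  refine ((HasACDeriv.of_contDiff (contDiff_jostFactor k)).mul ((hu.1.hasACDeriv_deriv hq).add
    ((HasACDeriv.of_contDiff hu.1.1).const_mul (Complex.I * k)))).congr_deriv fun x => ?_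
  rw [(hasDerivAt_jostFactor k x).deriv, qfun]
  push_cast
  linear_combination (-jostFactor k x * k ^ 2 * u x) * Complex.I_sq

theorem tendsto_jostFactor_mul (hu : IsJostPlus c k u) :
    Tendsto (fun x => jostFactor k x * u x) atTop (𝓝 1) :=
  hu.2

theorem exists_tendsto_jostFactor_mul (hu : IsJostPlus c k u) (hq : Integrable (qfun c)) :
    ∃ L, Tendsto (fun x => jostFactor k x * (deriv u x + Complex.I * k * u x)) atTop (𝓝 L) := by
  have hq' : Integrable fun x => k ^ 2 * (qfun c x : ℂ) := hq.ofReal.const_mul (k ^ 2)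
  have hcont : Continuous fun x => jostFactor k x * u x :=
    (contDiff_jostFactor k).continuous.mul hu.1.1.continuous
  have hlocal := hq'.locallyIntegrable.mul_continuous hcont
  have hbigO := (Asymptotics.isBigO_refl (fun x => k ^ 2 * (qfun c x : ℂ)) atTop).mul
    (hu.tendsto_jostFactor_mul.isBigO_one ℂ)
  simp only [mul_one] at hbigO
  exact (hu.hasACDeriv_jostFactor_mul hq.locallyIntegrable).exists_tendsto_atTop hlocal
    (hbigO.integrableAtFilter hlocal.aestronglyMeasurable.stronglyMeasurableAtFilter
      (hq'.integrableAtFilter _))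

theorem tendsto_jostFactor_mul_deriv (hu : IsJostPlus c k u) (hq : Integrable (qfun c)) :
    Tendsto (fun x => jostFactor k x * deriv u x) atTop (𝓝 (Complex.I * k)) := by
  obtain ⟨L, hL⟩ := hu.exists_tendsto_jostFactor_mul hq
  have hderiv : ∀ x, HasDerivAt (fun x => jostFactor k x * u x)
      (jostFactor k x * (deriv u x - Complex.I * k * u x)) x := fun x =>
    ((hasDerivAt_jostFactor k x).mul (hu.1.hasDerivAt x)).congr_deriv (by ring)
  have hderiv_lim : Tendsto (fun x => jostFactor k x * (deriv u x - Complex.I * k * u x)) atTop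
      (𝓝 (L - 2 * (Complex.I * k) * 1)) :=
    (hL.sub (hu.tendsto_jostFactor_mul.const_mul (2 * (Complex.I * k)))).congr fun x => by ring
  have hL_eq := eq_zero_of_tendsto_of_tendsto_deriv hderiv hu.tendsto_jostFactor_mul hderiv_lim
  rw [hL_eq] at hderiv_lim
  have hlim := hderiv_lim.add (hu.tendsto_jostFactor_mul.const_mul (Complex.I * k))
  rw [zero_add, mul_one] at hlim
  exact hlim.congr fun x => by ring

theorem tendsto_exp_mul_flux (hu : IsJostPlus c k u) (hk : k ≠ 0) (hq : Integrable (qfun c)) :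
    Tendsto (fun x => Real.exp (2 * k.im * x) * flux k u x) atTop (𝓝 1) := by
  have hlim := (Complex.continuous_re.tendsto _).comp
    (((hu.tendsto_jostFactor_mul_deriv hq).const_mul (Complex.I * k)⁻¹).mul
      ((Complex.continuous_conj.tendsto _).comp hu.tendsto_jostFactor_mul))
  rw [inv_mul_cancel₀ (mul_ne_zero Complex.I_ne_zero hk), one_mul, map_one, Complex.one_re] at hlim
  refine hlim.congr fun x => ?_
  rw [flux, ← Complex.re_ofReal_mul, ← jostFactor_mul_conj]
  simp only [Function.comp_apply, map_mul]
  congr 1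
  ring

theorem exp_le_flux (hu : IsJostPlus c k u) (hk : 0 < k.im) (hQ : Integrable (Qfun c))
    (hq : Integrable (qfun c)) (a : ℝ) :
    Real.exp (-(2 * k.im * (a + ∫ t in Set.Ioi a, Qfun c t))) ≤ flux k u a := by
  have hk0 : k ≠ 0 := fun h => hk.ne' (by rw [h, Complex.zero_im])
  have travel_time : ∀ x, ∫ t in a..x, 1 / c t = x - (a + ∫ t in a..x, Qfun c t) := fun x => by
    have hsub := intervalIntegral.integral_sub (μ := volume) (a := a) (b := x)
      (intervalIntegrable_const (c := (1 : ℝ))) hQ.intervalIntegrable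
    simp only [Qfun, sub_sub_cancel, intervalIntegral.integral_const, smul_eq_mul, mul_one]
      at hsub ⊢
    rw [hsub, sub_sub]
  have hdefect : Tendsto (fun x => Real.exp (-(2 * k.im * (a + ∫ t in a..x, Qfun c t)))) atTop
      (𝓝 (Real.exp (-(2 * k.im * (a + ∫ t in Set.Ioi a, Qfun c t))))) :=
    (Real.continuous_exp.tendsto _).comp
      (((intervalIntegral_tendsto_integral_Ioi a hQ.integrableOn tendsto_id).const_add a
        ).const_mul (2 * k.im)).neg
  have hlim := hdefect.mul (hu.tendsto_exp_mul_flux hk0 hq)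
  rw [mul_one] at hlim
  have hanti := hu.1.antitone_exp_mul_flux hk.le hQ.locallyIntegrable hq.locallyIntegrable a
  have hle := hanti.le_of_tendsto (hlim.congr fun x => ?_) a
  · simpa only [intervalIntegral.integral_same, mul_zero, Real.exp_zero, one_mul] using hle
  · rw [travel_time, ← mul_assoc, ← Real.exp_add]
    ring_nf

end IsJostPlus

namespace IsJostMinus

variable {c : ℝ → ℝ} {k : ℂ} {u : ℝ → ℂ}

theorem comp_neg (hu : IsJostMinus c k u) :
    IsJostPlus (fun x => c (-x)) k (fun x => u (-x)) := by
  obtain ⟨⟨hu_smooth, hu_eq⟩, hu_lim⟩ := hu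
  refine ⟨⟨hu_smooth.comp contDiff_neg, fun a b => ?_⟩,
    (hu_lim.comp tendsto_neg_atTop_atBot).congr fun x => ?_⟩
  · rw [deriv_comp_neg, deriv_comp_neg,
      intervalIntegral.integral_comp_neg (fun x => -(k ^ 2 / (c x : ℂ) ^ 2) * u x),
      hu_eq (-b) (-a)]
    ring
  · rw [Function.comp_apply, Complex.ofReal_neg, mul_neg]

theorem exp_le_neg_flux (hu : IsJostMinus c k u) (hk : 0 < k.im) (hQ : Integrable (Qfun c))
    (hq : Integrable (qfun c)) (a : ℝ) :
    Real.exp (2 * k.im * (a - ∫ t in Set.Iic a, Qfun c t)) ≤ -flux k u a := by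
  have hle := hu.comp_neg.exp_le_flux hk hQ.comp_neg hq.comp_neg (-a)
  have hint : ∫ t in Set.Ioi (-a), Qfun (fun x => c (-x)) t = ∫ t in Set.Iic a, Qfun c t := by
    rw [← neg_neg a, ← integral_comp_neg_Ioi, neg_neg]
    rfl
  rw [hint, flux_comp_neg, neg_neg] at hle
  convert hle using 2
  ring

end IsJostMinus

theorem norm_mul_sub_mul_sq (A a B b : ℂ) :
    ‖A * b - a * B‖ ^ 2 =
      ‖A * conj b + a * conj B‖ ^ 2 - 4 * (A * conj a).re * (B * conj b).re := by
  simp only [← Complex.normSq_eq_norm_sq, Complex.normSq_apply, Complex.mul_re, Complex.mul_im,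
    Complex.sub_re, Complex.sub_im, Complex.add_re, Complex.add_im, Complex.conj_re,
    Complex.conj_im]
  ring

theorem four_mul_flux_mul_neg_flux_le (k : ℂ) (u v : ℝ → ℂ) (x : ℝ) :
    4 * flux k u x * -flux k v x ≤ (‖deriv u x * v x - u x * deriv v x‖ / ‖k‖) ^ 2 := by
  have hid := norm_mul_sub_mul_sq ((Complex.I * k)⁻¹ * deriv u x) (u x)
    ((Complex.I * k)⁻¹ * deriv v x) (v x)
  have hfactor : (Complex.I * k)⁻¹ * deriv u x * v x - u x * ((Complex.I * k)⁻¹ * deriv v x) =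
      (Complex.I * k)⁻¹ * (deriv u x * v x - u x * deriv v x) := by ring
  rw [hfactor, norm_mul, norm_inv, norm_mul, Complex.norm_I, one_mul, inv_mul_eq_div] at hid
  rw [hid]
  simp only [flux]
  linarith [sq_nonneg ‖(Complex.I * k)⁻¹ * deriv u x * conj (v x) +
    u x * conj ((Complex.I * k)⁻¹ * deriv v x)‖]

theorem norm_exp_le_norm_wronskian {c : ℝ → ℝ} {k : ℂ} {u₁ u₂ : ℝ → ℂ} (hk : 0 < k.im)
    (hQ : Integrable (Qfun c)) (hq : Integrable (qfun c))
    (hu₁ : IsJostPlus c k u₁) (hu₂ : IsJostMinus c k u₂) (x : ℝ) :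
    ‖2 * Complex.I * k * Complex.exp (Complex.I * k * ((∫ s, Qfun c s : ℝ) : ℂ))‖ ≤
      ‖deriv u₁ x * u₂ x - u₁ x * deriv u₂ x‖ := by
  have hk0 : 0 < ‖k‖ := hk.trans_le (Complex.im_le_norm k)
  have hsplit : (∫ t in Set.Iic x, Qfun c t) + ∫ t in Set.Ioi x, Qfun c t = ∫ t, Qfun c t :=
    intervalIntegral.integral_Iic_add_Ioi hQ.integrableOn hQ.integrableOn
  have hnorm : ‖Complex.exp (Complex.I * k * ((∫ s, Qfun c s : ℝ) : ℂ))‖ =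
      Real.exp (-(k.im * ∫ s, Qfun c s)) := by
    rw [Complex.norm_exp, Complex.re_mul_ofReal, Complex.I_mul_re, neg_mul]
  have hsq : (2 * Real.exp (-(k.im * ∫ s, Qfun c s))) ^ 2 ≤
      (‖deriv u₁ x * u₂ x - u₁ x * deriv u₂ x‖ / ‖k‖) ^ 2 :=
    calc (2 * Real.exp (-(k.im * ∫ s, Qfun c s))) ^ 2
        = 4 * (Real.exp (-(2 * k.im * (x + ∫ t in Set.Ioi x, Qfun c t))) *
            Real.exp (2 * k.im * (x - ∫ t in Set.Iic x, Qfun c t))) := by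
          rw [← Real.exp_add, mul_pow, ← Real.exp_nat_mul, ← hsplit]
          ring_nf
      _ ≤ 4 * (flux k u₁ x * -flux k u₂ x) := by
          gcongr
          · exact (Real.exp_pos _).le.trans (hu₁.exp_le_flux hk hQ hq x)
          · exact hu₁.exp_le_flux hk hQ hq x
          · exact hu₂.exp_le_neg_flux hk hQ hq x
      _ ≤ _ := mul_assoc 4 (flux k u₁ x) _ ▸ four_mul_flux_mul_neg_flux_le k u₁ u₂ x
  have hle := (le_div_iff₀ hk0).1 (le_of_sq_le_sq hsq (by positivity))
  rw [norm_mul, norm_mul, norm_mul, hnorm, Complex.norm_I, Complex.norm_ofNat]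
  linarith

end Helmholtz

theorem norm_le_of_forall_im_pos {E : Type*} [SeminormedAddCommGroup E] {f : ℂ → E} {C : ℝ}
    (hf : ContinuousOn f {k : ℂ | 0 ≤ k.im}) (hC : ∀ k : ℂ, 0 < k.im → ‖f k‖ ≤ C) {k : ℂ}
    (hk : 0 ≤ k.im) : ‖f k‖ ≤ C := by
  have hclosure : closure {k : ℂ | 0 < k.im} = {k : ℂ | 0 ≤ k.im} :=
    Complex.closure_setOfPred_lt_im 0
  rw [← hclosure] at hf
  exact le_on_closure hC hf.norm continuousOn_const (hclosure ▸ hk)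

theorem HypH2.integrable_sub_one {c : ℝ → ℝ} (h2 : HypH2 c) (hc : AEStronglyMeasurable c) :
    Integrable fun x => c x - 1 := by
  obtain ⟨C, -, δ, hδ, hbound⟩ := h2
  have hdecay : Integrable fun x : ℝ => (1 + ‖x‖ ^ 2) ^ (-(1 + δ) / 2) :=
    integrable_rpow_neg_one_add_norm_sq (by simpa using hδ)
  refine (hdecay.const_mul C).mono' (hc.sub aestronglyMeasurable_const) ?_
  simpa only [Real.norm_eq_abs, sq_abs] using hbound

namespace HypH1

variable {c : ℝ → ℝ}

theorem ae_ne_zero (h1 : HypH1 c) : ∀ᵐ x, c x ≠ 0 := by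
  obtain ⟨c₀, hc₀, _, -, hc⟩ := h1
  exact hc.mono fun x hx => (hc₀.trans hx.1).ne'

theorem exists_norm_one_div_le (h1 : HypH1 c) : ∃ M, ∀ᵐ x, ‖1 / c x‖ ≤ M := by
  obtain ⟨c₀, hc₀, _, -, hc⟩ := h1
  refine ⟨1 / c₀, hc.mono fun x hx => ?_⟩
  rw [Real.norm_of_nonneg (one_div_pos.2 (hc₀.trans hx.1)).le]
  exact one_div_le_one_div_of_le hc₀ hx.1.le

theorem integrable_Qfun (h1 : HypH1 c) (hint : Integrable fun x => c x - 1) :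
    Integrable (Qfun c) := by
  obtain ⟨M, hM⟩ := h1.exists_norm_one_div_le
  have hc : AEMeasurable c := by
    simpa only [sub_add_cancel] using hint.aemeasurable.add_const 1
  refine (hint.bdd_mul (hc.const_div 1).aestronglyMeasurable hM).congr ?_
  filter_upwards [h1.ae_ne_zero] with x hx
  rw [Qfun, mul_sub, one_div_mul_cancel hx, mul_one]

theorem integrable_qfun (h1 : HypH1 c) (hQ : Integrable (Qfun c)) : Integrable (qfun c) := by
  obtain ⟨M, hM⟩ := h1.exists_norm_one_div_le
  have hc := (locallyIntegrable_one_div hQ.locallyIntegrable).aestronglyMeasurable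
  refine (hQ.add (hQ.bdd_mul hc hM)).congr (.of_forall fun x => ?_)
  simp only [Pi.add_apply, Qfun, qfun]
  ring

end HypH1

theorem transmission_bound_general {c : ℝ → ℝ} (_hc : ∀ᵐ x, c x ≠ 0)
    (hQ : Integrable (Qfun c)) (hq : Integrable (qfun c)) {U₁ U₂ : ℂ → ℝ → ℂ}
    (hU₁ : ∀ k : ℂ, 0 < k.im → IsJostPlus c k (U₁ k))
    (hU₂ : ∀ k : ℂ, 0 < k.im → IsJostMinus c k (U₂ k)) {T : ℂ → ℂ}
    (hTcont : ContinuousOn T {k : ℂ | 0 ≤ k.im}) (x : ℝ)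
    (hTw : ∀ k : ℂ, 0 < k.im →
      T k * (deriv (U₁ k) x * U₂ k x - U₁ k x * deriv (U₂ k) x) = 2 * Complex.I * k) :
    ∀ k : ℂ, 0 ≤ k.im →
      ‖T k * Complex.exp (Complex.I * k * ((∫ s : ℝ, Qfun c s : ℝ) : ℂ))‖ ≤ 1 := by
  have hcont : ContinuousOn
      (fun k => T k * Complex.exp (Complex.I * k * ((∫ s : ℝ, Qfun c s : ℝ) : ℂ)))
      {k : ℂ | 0 ≤ k.im} := hTcont.mul (by fun_prop)
  refine fun k => norm_le_of_forall_im_pos hcont fun k hk => ?_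
  have hW := norm_exp_le_norm_wronskian hk hQ hq (hU₁ k hk) (hU₂ k hk) x
  set W := deriv (U₁ k) x * U₂ k x - U₁ k x * deriv (U₂ k) x
  have hk0 : k ≠ 0 := fun h => hk.ne' (by rw [h, Complex.zero_im])
  have hW_pos : 0 < ‖W‖ := lt_of_lt_of_le (norm_pos_iff.2 <| mul_ne_zero
    (mul_ne_zero (mul_ne_zero two_ne_zero Complex.I_ne_zero) hk0) (Complex.exp_ne_zero _)) hW
  rw [← hTw k hk, mul_right_comm, norm_mul] at hW
  exact le_of_mul_le_mul_right (hW.trans_eq (one_mul ‖W‖).symm) hW_pos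

/-- `|T(k) e^{ik ∫Q}| ≤ 1` on the closed upper half-plane. -/
theorem transmission_bound (c : ℝ → ℝ) (hmeas : Measurable c)
    (h1 : HypH1 c) (h2 : HypH2 c)
    (U₁ U₂ : ℂ → ℝ → ℂ)
    (hU₁ : ∀ k : ℂ, 0 ≤ k.im → IsJostPlus c k (U₁ k))
    (hU₂ : ∀ k : ℂ, 0 ≤ k.im → IsJostMinus c k (U₂ k))
    (hreg₁ : JostFamilyRegular U₁) (hreg₂ : JostFamilyRegular U₂)
    (T : ℂ → ℂ)
    (hTcont : ContinuousOn T {k : ℂ | 0 ≤ k.im})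
    (hThol : DifferentiableOn ℂ T {k : ℂ | 0 < k.im})
    (hTw : ∀ k : ℂ, 0 ≤ k.im → ∀ x : ℝ,
      T k * (deriv (U₁ k) x * U₂ k x - U₁ k x * deriv (U₂ k) x) = 2 * Complex.I * k) :
    ∀ k : ℂ, 0 ≤ k.im →
      ‖T k * Complex.exp (Complex.I * k * ((∫ s : ℝ, Qfun c s : ℝ) : ℂ))‖ ≤ 1 := by
  have hQ := h1.integrable_Qfun (h2.integrable_sub_one hmeas.aestronglyMeasurable)
  exact transmission_bound_general h1.ae_ne_zero hQ (h1.integrable_qfun hQ)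
    (fun k hk => hU₁ k hk.le) (fun k hk => hU₂ k hk.le) hTcont 0 fun k hk => hTw k hk.le 0
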